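/- arXiv:2603.10938 — 6 statements merged into one kernel-verified Lean document; each statement's English description precedes it below -/
import Mathlib

section
/- Let μ and ν be Borel probability measures on ℝ with quantile functions Q_μ, Q_ν, and let w : (0,1) → ℝ be measurable with w(q) ≥ 0 for all q ∈ (0,1). Assume that q ↦ w(q)·Q_μ(q) and q ↦ w(q)·Q_ν(q) are integrable on (0,1) with respect to Lebesgue measure. Then −L_w(ν,μ) ≤ ρ_w(ν) − ρ_w(μ) ≤ L_w(μ,ν). -/
open MeasureTheory Set

/-- The cumulative distribution function of a Borel measure on ℝ:
`F_μ(x) = μ((-∞, x])`. -/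
noncomputable def cdfFn (μ : Measure ℝ) (x : ℝ) : ℝ := (μ (Iic x)).toReal

/-- The quantile function (generalized inverse of the CDF):
`Q_μ(p) = sInf { x | p ≤ F_μ(x) }`. -/
noncomputable def quantileFn (μ : Measure ℝ) (p : ℝ) : ℝ := sInf { x : ℝ | p ≤ cdfFn μ x }

/-- Spectral risk: `ρ_w(μ) = ∫_{(0,1)} w(q) · Q_μ(q) dq`. -/
noncomputable def spectralRisk (w : ℝ → ℝ) (μ : Measure ℝ) : ℝ :=
  ∫ q in Ioo (0:ℝ) 1, w q * quantileFn μ q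

/-- Weighted FSD violation: `L_w(μ,ν) = ∫_{(0,1)} w(q) · max(Q_ν(q) − Q_μ(q), 0) dq`. -/
noncomputable def fsdViolation (w : ℝ → ℝ) (μ ν : Measure ℝ) : ℝ :=
  ∫ q in Ioo (0:ℝ) 1, w q * max (quantileFn ν q - quantileFn μ q) 0

/-- The upper bound. Since `w ≥ 0`, the integrand of `fsdViolation w μ ν` is the positive part of
`w * Q_ν - w * Q_μ`, hence integrable, and it dominates that difference pointwise. -/
theorem spectralRisk_sub_le_fsdViolation (μ ν : Measure ℝ) (w : ℝ → ℝ)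
    (hw0 : ∀ q ∈ Ioo (0:ℝ) 1, 0 ≤ w q)
    (hμ : IntegrableOn (fun q => w q * quantileFn μ q) (Ioo (0:ℝ) 1))
    (hν : IntegrableOn (fun q => w q * quantileFn ν q) (Ioo (0:ℝ) 1)) :
    spectralRisk w ν - spectralRisk w μ ≤ fsdViolation w μ ν := by
  have hpos : fsdViolation w μ ν =
      ∫ q in Ioo (0:ℝ) 1, max (w q * quantileFn ν q - w q * quantileFn μ q) 0 := by
    refine setIntegral_congr_fun measurableSet_Ioo fun q hq => ?_
    simp only [mul_max_of_nonneg _ _ (hw0 q hq), mul_sub, mul_zero]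
  rw [hpos, spectralRisk, spectralRisk, ← integral_sub hν hμ]
  exact integral_mono (hν.sub hμ) (hν.sub hμ).pos_part fun q => le_max_left _ _

theorem spectral_risk_difference_bounds
    (μ ν : Measure ℝ) [IsProbabilityMeasure μ] [IsProbabilityMeasure ν]
    (w : ℝ → ℝ) (hw : Measurable w) (hw0 : ∀ q ∈ Ioo (0:ℝ) 1, 0 ≤ w q)
    (hμ : IntegrableOn (fun q => w q * quantileFn μ q) (Ioo (0:ℝ) 1))
    (hν : IntegrableOn (fun q => w q * quantileFn ν q) (Ioo (0:ℝ) 1)) :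
    -fsdViolation w ν μ ≤ spectralRisk w ν - spectralRisk w μ ∧
      spectralRisk w ν - spectralRisk w μ ≤ fsdViolation w μ ν := by
  -- The lower bound is the upper bound with `μ` and `ν` exchanged, negated.
  have h := spectralRisk_sub_le_fsdViolation ν μ w hw0 hν hμ
  exact ⟨by linarith, spectralRisk_sub_le_fsdViolation μ ν w hw0 hμ hν⟩
end

section
/- Let μ and ν be Borel probability measures on ℝ with quantile functions Q_μ, Q_ν, and let h : ℝ → ℝ be a convex nonnegative function. Then the extended-real integral ∫⁻_{q ∈ (0,1)} ENNReal.ofReal( h( Q_μ(q) − Q_ν(q) ) ) dq (with respect to Lebesgue measure on (0,1)) equals the infimum over all couplings γ of μ and ν of ∫⁻_{(x,y) ∈ ℝ×ℝ} ENNReal.ofReal( h(x − y) ) dγ, and moreover this infimum is attained by some coupling of μ and ν. -/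
/-!
Write `ρ⋆` for the law of `X - Y` under the quantile coupling and `ρ` for its law under an arbitrary
coupling. The hinge costs `(x - y - s)⁺` are the heart of the matter: by Tonelli,
`E (X - Y - s)⁺ = ∫ P(Y + s ≤ w < X) dw`, and `P(Y + s ≤ w < X) ≥ F_ν (w - s) - F_μ w`, with
equality (up to positive parts) for the quantile coupling, since
`Q_ν q ≤ w - s` and `w < Q_μ q` mean exactly `F_μ w < q ≤ F_ν (w - s)`.
Exchanging `μ` and `ν` gives the same for the reflected hinges `(s - (x - y))⁺`.

It remains to see that a nonnegative convex `h` is a mixture of a constant and hinges of both kinds.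
If `h` attains its minimum at `a`, then on the right of `a` one has `h t - h a = ∫_a^t h'₊`; by the
layer cake formula this is an integral over levels `r > 0` of the length of
`{u ∈ (a, t] | r < h'₊ u}`, which is a hinge in `t` because `h'₊` is monotone. The left half is
obtained by reflection. If the infimum of `h` is not attained, `h` is replaced by `max h (h a)`
with `h a` within `ε` of the infimum, which costs at most `ε` as `ρ` has mass one.
All integrals are Lebesgue integrals of nonnegative functions, so no moments are needed.
-/

open MeasureTheory Set
open scoped ENNReal

open Filter Topology

/-! ### Convex functions as mixtures of hinges -/

/-- On the right of a minimum, a convex function is the integral of its right derivative. -/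
lemma ofReal_sub_eq_lintegral_rightDeriv {h : ℝ → ℝ} (hconv : ConvexOn ℝ Set.univ h) {a : ℝ}
    (ha : ∀ t, h a ≤ h t) :
    ∃ d : ℝ → ℝ, Monotone d ∧ (∀ u, a ≤ u → 0 ≤ d u) ∧
      ∀ t, ENNReal.ofReal (h (max t a) - h a) = ∫⁻ u in Ioc a t, ENNReal.ofReal (d u) := by
  have hcont : Continuous h := by
    rw [← continuousOn_univ]; exact hconv.continuousOn isOpen_univ
  have hmono : Monotone fun u => derivWithin h (Ioi u) u := by
    have := hconv.monotoneOn_rightDeriv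
    rw [interior_univ] at this
    exact monotoneOn_univ.1 this
  have hnn : ∀ u, a ≤ u → 0 ≤ derivWithin h (Ioi u) u := by
    intro u hu
    refine le_trans ?_ (hmono hu)
    change 0 ≤ derivWithin h (Ioi a) a
    rw [hconv.rightDeriv_eq_sInf_slope_of_mem_interior (by simp)]
    apply Real.sInf_nonneg
    rintro _ ⟨y, hy, rfl⟩
    rw [slope_def_field]
    exact div_nonneg (sub_nonneg.2 (ha _)) (sub_nonneg.2 (le_of_lt hy.2))
  refine ⟨_, hmono, hnn, fun t => ?_⟩
  rcases le_or_gt t a with hta | hta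
  · simp [max_eq_right hta, Ioc_eq_empty (not_lt.2 hta)]
  · rw [max_eq_left hta.le]
    have hint : IntervalIntegrable (fun u => derivWithin h (Ioi u) u) volume a t :=
      hmono.intervalIntegrable
    rw [← intervalIntegral.integral_eq_sub_of_hasDeriv_right hcont.continuousOn
      (fun x _ => hconv.hasDerivWithinAt_rightDeriv_of_mem_interior (by simp)) hint,
      intervalIntegral.integral_of_le hta.le]
    apply ofReal_integral_eq_lintegral_ofReal
    · exact (intervalIntegrable_iff_integrableOn_Ioc_of_le hta.le).1 hint
    · filter_upwards [ae_restrict_mem measurableSet_Ioc] with u hu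
      exact hnn u hu.1.le

/-- Superlevel sets of a monotone function are rays, so their truncations have hinge length. -/
lemma volume_superlevel_eq_hinge {d : ℝ → ℝ} (hd : Monotone d) (a r : ℝ) :
    (∀ t, volume (Ioc a t ∩ {u | r < d u}) = 0) ∨
      ∃ s, ∀ t, volume (Ioc a t ∩ {u | r < d u}) = ENNReal.ofReal (t - s) := by
  by_cases hne : ({u | a < u ∧ r < d u} : Set ℝ).Nonempty
  · right
    have hbdd : BddBelow {u | a < u ∧ r < d u} := ⟨a, fun u hu => hu.1.le⟩
    refine ⟨sInf {u | a < u ∧ r < d u}, fun t => le_antisymm ?_ ?_⟩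
    · rw [← Real.volume_Icc]
      exact measure_mono fun u hu => ⟨csInf_le hbdd ⟨hu.1.1, hu.2⟩, hu.1.2⟩
    · rw [← Real.volume_Ioc]
      refine measure_mono fun u hu => ?_
      obtain ⟨v, hv, hvu⟩ := (csInf_lt_iff hbdd hne).1 hu.1
      exact ⟨⟨hv.1.trans hvu, hu.2⟩, lt_of_lt_of_le hv.2 (hd hvu.le)⟩
  · left
    intro t
    have : Ioc a t ∩ {u | r < d u} = ∅ := by
      ext u
      simp only [mem_inter_iff, mem_Ioc, mem_ofPred_eq, mem_empty_iff_false, iff_false]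
      exact fun hu => hne ⟨u, hu.1.1, hu.2⟩
    simp [this]

/-- The right half of a convex function with a minimum at `a` respects the hinge order. -/
lemma lintegral_right_half_le {ρ' ρ : Measure ℝ} [SFinite ρ'] [SFinite ρ]
    (H : ∀ s, ∫⁻ t, ENNReal.ofReal (t - s) ∂ρ' ≤ ∫⁻ t, ENNReal.ofReal (t - s) ∂ρ)
    {h : ℝ → ℝ} (hconv : ConvexOn ℝ Set.univ h) {a : ℝ} (ha : ∀ t, h a ≤ h t) :
    ∫⁻ t, ENNReal.ofReal (h (max t a) - h a) ∂ρ' ≤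
      ∫⁻ t, ENNReal.ofReal (h (max t a) - h a) ∂ρ := by
  obtain ⟨d, hd, hnn, hrep⟩ := ofReal_sub_eq_lintegral_rightDeriv hconv ha
  have hlayer : ∀ t, ENNReal.ofReal (h (max t a) - h a) =
      ∫⁻ r in Ioi 0, volume (Ioc a t ∩ {u | r < d u}) := by
    intro t
    rw [hrep t, lintegral_eq_lintegral_meas_lt _ _ hd.measurable.aemeasurable]
    · refine lintegral_congr fun r => ?_
      rw [Measure.restrict_apply (measurableSet_lt measurable_const hd.measurable), inter_comm]
    · filter_upwards [ae_restrict_mem measurableSet_Ioc] with u hu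
      exact hnn u hu.1.le
  have hmeas : Measurable (Function.uncurry
      fun (t r : ℝ) => volume (Ioc a t ∩ {u | r < d u})) := by
    have hs : MeasurableSet {p : (ℝ × ℝ) × ℝ | (a < p.2 ∧ p.2 ≤ p.1.1) ∧ p.1.2 < d p.2} := by
      refine ((measurableSet_lt measurable_const measurable_snd).inter
        (measurableSet_le measurable_snd (measurable_fst.comp measurable_fst))).inter
        (measurableSet_lt (measurable_snd.comp measurable_fst) (hd.measurable.comp measurable_snd))
    exact measurable_measure_prodMk_left (ν := (volume : Measure ℝ)) hs
  simp_rw [hlayer]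
  rw [lintegral_lintegral_swap hmeas.aemeasurable, lintegral_lintegral_swap hmeas.aemeasurable]
  refine lintegral_mono fun r => ?_
  rcases volume_superlevel_eq_hinge hd a r with h0 | ⟨s, hs⟩
  · simp [h0]
  · simpa only [hs] using H s

lemma lintegral_convex_le_of_isMin {ρ' ρ : Measure ℝ} [IsProbabilityMeasure ρ']
    [IsProbabilityMeasure ρ]
    (H : ∀ s, ∫⁻ t, ENNReal.ofReal (t - s) ∂ρ' ≤ ∫⁻ t, ENNReal.ofReal (t - s) ∂ρ)
    (H' : ∀ s, ∫⁻ t, ENNReal.ofReal (s - t) ∂ρ' ≤ ∫⁻ t, ENNReal.ofReal (s - t) ∂ρ)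
    {h : ℝ → ℝ} (hconv : ConvexOn ℝ Set.univ h) (hnonneg : ∀ x, 0 ≤ h x)
    {a : ℝ} (ha : ∀ t, h a ≤ h t) :
    ∫⁻ t, ENNReal.ofReal (h t) ∂ρ' ≤ ∫⁻ t, ENNReal.ofReal (h t) ∂ρ := by
  have hcont : Continuous h := by
    rw [← continuousOn_univ]; exact hconv.continuousOn isOpen_univ
  have hright := lintegral_right_half_le H hconv ha
  have hleft : ∫⁻ t, ENNReal.ofReal (h (-max (-t) (-a)) - h a) ∂ρ' ≤
      ∫⁻ t, ENNReal.ofReal (h (-max (-t) (-a)) - h a) ∂ρ := by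
    have hconv' : ConvexOn ℝ Set.univ fun t => h (-t) := by
      simpa [Function.comp_def] using hconv.comp_linearMap (-LinearMap.id : ℝ →ₗ[ℝ] ℝ)
    have key := lintegral_right_half_le (ρ' := ρ'.map Neg.neg) (ρ := ρ.map Neg.neg) (a := -a)
      (fun s => by
        rw [lintegral_map (by fun_prop) measurable_neg, lintegral_map (by fun_prop) measurable_neg]
        have e : ∀ t : ℝ, -t - s = -s - t := fun t => by ring
        simpa only [e] using H' (-s))
      hconv' (by simpa using fun t => ha (-t))
    rw [lintegral_map (by fun_prop) measurable_neg,
      lintegral_map (by fun_prop) measurable_neg] at key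
    simpa using key
  have hdec : ∀ t, ENNReal.ofReal (h t) = ENNReal.ofReal (h a) +
      (ENNReal.ofReal (h (max t a) - h a) + ENNReal.ofReal (h (-max (-t) (-a)) - h a)) := by
    intro t
    rw [← ENNReal.ofReal_add (sub_nonneg.2 (ha _)) (sub_nonneg.2 (ha _)),
      ← ENNReal.ofReal_add (hnonneg a)
        (add_nonneg (sub_nonneg.2 (ha _)) (sub_nonneg.2 (ha _)))]
    congr 1
    rcases le_total t a with hta | hta
    · rw [max_eq_right hta, max_eq_left (neg_le_neg hta), neg_neg]; ring
    · rw [max_eq_left hta, max_eq_right (neg_le_neg hta), neg_neg]; ring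
  rw [lintegral_congr hdec, lintegral_congr hdec]
  rw [lintegral_add_left (by fun_prop), lintegral_add_left (by fun_prop),
    lintegral_add_left (by fun_prop), lintegral_add_left (by fun_prop)]
  simp only [lintegral_const, measure_univ]
  gcongr

/-- Two probability measures ordered on all hinges, in both directions, are ordered on all
nonnegative convex functions. -/
lemma lintegral_convex_le {ρ' ρ : Measure ℝ} [IsProbabilityMeasure ρ'] [IsProbabilityMeasure ρ]
    (H : ∀ s, ∫⁻ t, ENNReal.ofReal (t - s) ∂ρ' ≤ ∫⁻ t, ENNReal.ofReal (t - s) ∂ρ)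
    (H' : ∀ s, ∫⁻ t, ENNReal.ofReal (s - t) ∂ρ' ≤ ∫⁻ t, ENNReal.ofReal (s - t) ∂ρ)
    {h : ℝ → ℝ} (hconv : ConvexOn ℝ Set.univ h) (hnonneg : ∀ x, 0 ≤ h x) :
    ∫⁻ t, ENNReal.ofReal (h t) ∂ρ' ≤ ∫⁻ t, ENNReal.ofReal (h t) ∂ρ := by
  have hcont : Continuous h := by
    rw [← continuousOn_univ]; exact hconv.continuousOn isOpen_univ
  refine ENNReal.le_of_forall_pos_le_add fun ε hε _ => ?_
  have hbdd : BddBelow (range h) := ⟨0, by rintro _ ⟨x, rfl⟩; exact hnonneg x⟩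
  obtain ⟨a, ha⟩ := exists_lt_of_ciInf_lt (show ⨅ x, h x < (⨅ x, h x) + (ε : ℝ) by
    simpa using hε)
  have hae : ∀ t, h a ≤ h t + ε := fun t => ha.le.trans (by gcongr; exact ciInf_le hbdd t)
  have hmid := lintegral_convex_le_of_isMin H H' (h := fun t => max (h t) (h a)) (a := a)
    (hconv.sup (convexOn_const _ convex_univ)) (fun x => (hnonneg x).trans (le_max_left _ _))
    (fun t => by simp)
  calc ∫⁻ t, ENNReal.ofReal (h t) ∂ρ'
      ≤ ∫⁻ t, ENNReal.ofReal (max (h t) (h a)) ∂ρ' :=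
        lintegral_mono fun t => ENNReal.ofReal_le_ofReal (le_max_left _ _)
    _ ≤ ∫⁻ t, ENNReal.ofReal (max (h t) (h a)) ∂ρ := hmid
    _ ≤ ∫⁻ t, (ENNReal.ofReal (h t) + ε) ∂ρ := by
        refine lintegral_mono fun t => ?_
        rw [← ENNReal.ofReal_coe_nnreal, ← ENNReal.ofReal_add (hnonneg t) ε.coe_nonneg]
        exact ENNReal.ofReal_le_ofReal (max_le (by simp) (hae t))
    _ = ∫⁻ t, ENNReal.ofReal (h t) ∂ρ + ε := by
        rw [lintegral_add_left (by fun_prop)]; simp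

/-! ### Quantile functions -/

lemma cdfFn_eq_cdf (μ : Measure ℝ) [IsProbabilityMeasure μ] (x : ℝ) :
    cdfFn μ x = ProbabilityTheory.cdf μ x :=
  (ProbabilityTheory.cdf_eq_real μ x).symm

/-- The Galois connection between the quantile function and the distribution function. -/
lemma quantileFn_le_iff (μ : Measure ℝ) [IsProbabilityMeasure μ] {q : ℝ} (hq : q ∈ Ioo (0 : ℝ) 1)
    (x : ℝ) : quantileFn μ q ≤ x ↔ q ≤ cdfFn μ x := by
  unfold quantileFn
  simp_rw [cdfFn_eq_cdf]
  set F := ProbabilityTheory.cdf μ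
  have hF : Monotone F := ProbabilityTheory.monotone_cdf μ
  have hbdd : BddBelow {x | q ≤ F x} := by
    obtain ⟨b, hb⟩ :=
      ((ProbabilityTheory.tendsto_cdf_atBot μ).eventually_lt_const hq.1).exists
    refine ⟨b, fun y hy => ?_⟩
    by_contra! hlt
    exact absurd (hy.trans (hF hlt.le)) (not_le.2 hb)
  have hne : {x | q ≤ F x}.Nonempty :=
    (((ProbabilityTheory.tendsto_cdf_atTop μ).eventually_const_lt hq.2).exists).imp
      fun _ hb => hb.le
  refine ⟨fun hx => ?_, fun hx => csInf_le hbdd hx⟩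
  have htend : Tendsto F (𝓝[>] x) (𝓝 (F x)) :=
    (F.right_continuous x).tendsto.mono_left (nhdsWithin_mono _ Ioi_subset_Ici_self)
  refine ge_of_tendsto htend ?_
  filter_upwards [self_mem_nhdsWithin] with y hy
  obtain ⟨z, hz, hzy⟩ := (csInf_lt_iff hbdd hne).1 (lt_of_le_of_lt hx hy)
  exact le_trans hz (hF hzy.le)

lemma aemeasurable_quantileFn (μ : Measure ℝ) [IsProbabilityMeasure μ] :
    AEMeasurable (quantileFn μ) (volume.restrict (Ioo (0 : ℝ) 1)) := by
  refine aemeasurable_restrict_of_monotoneOn measurableSet_Ioo fun p hp q hq hpq => ?_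
  rw [quantileFn_le_iff μ hp]
  exact hpq.trans ((quantileFn_le_iff μ hq _).1 le_rfl)

lemma isProbabilityMeasure_volume_Ioo :
    IsProbabilityMeasure (volume.restrict (Ioo (0 : ℝ) 1)) := ⟨by simp⟩

lemma map_quantileFn (μ : Measure ℝ) [IsProbabilityMeasure μ] :
    (volume.restrict (Ioo (0 : ℝ) 1)).map (quantileFn μ) = μ := by
  have := isProbabilityMeasure_volume_Ioo
  have hm := aemeasurable_quantileFn μ
  have := Measure.isProbabilityMeasure_map hm
  refine Measure.ext_of_Iic _ _ fun x => ?_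
  have h1 : cdfFn μ x ≤ 1 := by
    rw [cdfFn_eq_cdf]; exact ProbabilityTheory.cdf_le_one μ x
  rw [Measure.map_apply_of_aemeasurable hm measurableSet_Iic,
    Measure.restrict_apply' measurableSet_Ioo]
  have hval : ENNReal.ofReal (cdfFn μ x - 0) = μ (Iic x) := by
    rw [sub_zero, cdfFn, ENNReal.ofReal_toReal (measure_ne_top _ _)]
  rw [← hval]
  apply le_antisymm
  · rw [← Real.volume_Ioc]
    exact measure_mono fun q hq => ⟨hq.2.1, (quantileFn_le_iff μ hq.2 x).1 hq.1⟩
  · rw [← Real.volume_Ioo]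
    refine measure_mono fun q hq => ?_
    have hq' : q ∈ Ioo (0 : ℝ) 1 := ⟨hq.1, hq.2.trans_le h1⟩
    exact ⟨(quantileFn_le_iff μ hq' x).2 hq.2.le, hq'⟩

/-- The quantile coupling: the joint law of both quantile functions at a common uniform level. -/
noncomputable def quantileCoupling (μ ν : Measure ℝ) : Measure (ℝ × ℝ) :=
  (volume.restrict (Ioo (0 : ℝ) 1)).map fun q => (quantileFn μ q, quantileFn ν q)

/-! ### Hinge costs -/

/-- Tonelli's formula `E (X - Y - s)⁺ = ∫ P(Y + s ≤ w < X) dw`. -/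
lemma lintegral_hinge_eq (γ : Measure (ℝ × ℝ)) [SFinite γ] (s : ℝ) :
    ∫⁻ p, ENNReal.ofReal (p.1 - p.2 - s) ∂γ = ∫⁻ w, γ {p | p.2 + s ≤ w ∧ w < p.1} := by
  have hs : MeasurableSet {z : (ℝ × ℝ) × ℝ | z.1.2 + s ≤ z.2 ∧ z.2 < z.1.1} :=
    (measurableSet_le (f := fun z : (ℝ × ℝ) × ℝ => z.1.2 + s) (g := fun z => z.2)
      (by fun_prop) (by fun_prop)).inter
      (measurableSet_lt (f := fun z : (ℝ × ℝ) × ℝ => z.2) (g := fun z => z.1.1)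
        (by fun_prop) (by fun_prop))
  have h1 := Measure.prod_apply (μ := γ) (ν := (volume : Measure ℝ)) hs
  rw [Measure.prod_apply_symm hs] at h1
  refine Eq.trans (lintegral_congr fun p => ?_) h1.symm
  rw [sub_sub, ← Real.volume_Ico]
  rfl

/-- The quantile coupling minimises all hinge costs. -/
lemma lintegral_hinge_quantileCoupling_le (μ ν : Measure ℝ) [IsProbabilityMeasure μ]
    [IsProbabilityMeasure ν] (γ : Measure (ℝ × ℝ)) [IsProbabilityMeasure γ]
    (h1 : γ.map Prod.fst = μ) (h2 : γ.map Prod.snd = ν) (s : ℝ) :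
    ∫⁻ p, ENNReal.ofReal (p.1 - p.2 - s) ∂(quantileCoupling μ ν) ≤
      ∫⁻ p, ENNReal.ofReal (p.1 - p.2 - s) ∂γ := by
  have := isProbabilityMeasure_volume_Ioo
  have hm : AEMeasurable (fun q => (quantileFn μ q, quantileFn ν q))
      (volume.restrict (Ioo (0 : ℝ) 1)) :=
    (aemeasurable_quantileFn μ).prodMk (aemeasurable_quantileFn ν)
  have : IsProbabilityMeasure (quantileCoupling μ ν) := Measure.isProbabilityMeasure_map hm
  rw [lintegral_hinge_eq, lintegral_hinge_eq]
  refine lintegral_mono fun w => ?_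
  have hs : MeasurableSet {p : ℝ × ℝ | p.2 + s ≤ w ∧ w < p.1} :=
    (measurableSet_le (f := fun p : ℝ × ℝ => p.2 + s) (g := fun _ => w)
      (by fun_prop) (by fun_prop)).inter
      (measurableSet_lt (f := fun _ : ℝ × ℝ => w) (g := fun p => p.1)
        (by fun_prop) (by fun_prop))
  calc quantileCoupling μ ν {p | p.2 + s ≤ w ∧ w < p.1}
      ≤ ENNReal.ofReal (cdfFn ν (w - s) - cdfFn μ w) := by
        rw [quantileCoupling, Measure.map_apply_of_aemeasurable hm hs,
          Measure.restrict_apply' measurableSet_Ioo, ← Real.volume_Ioc]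
        refine measure_mono fun q hq => ⟨?_, ?_⟩
        · exact lt_of_not_ge fun hc => absurd ((quantileFn_le_iff μ hq.2 w).2 hc)
            (not_le.2 hq.1.2)
        · exact (quantileFn_le_iff ν hq.2 _).1 (le_sub_iff_add_le.2 hq.1.1)
    _ = ν (Iic (w - s)) - μ (Iic w) := by
        rw [ENNReal.ofReal_sub _ (by rw [cdfFn]; positivity), cdfFn, cdfFn,
          ENNReal.ofReal_toReal (measure_ne_top _ _), ENNReal.ofReal_toReal (measure_ne_top _ _)]
    _ ≤ γ {p | p.2 + s ≤ w ∧ w < p.1} := by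
        rw [← h1, ← h2, Measure.map_apply measurable_fst measurableSet_Iic,
          Measure.map_apply measurable_snd measurableSet_Iic, tsub_le_iff_right]
        refine (measure_mono fun p hp => ?_).trans (measure_union_le _ _)
        rcases le_or_gt p.1 w with hw | hw
        · exact Or.inr hw
        · exact Or.inl ⟨le_sub_iff_add_le.1 hp, hw⟩

theorem quantile_coupling_is_least_transport_cost
    (μ ν : Measure ℝ) [IsProbabilityMeasure μ] [IsProbabilityMeasure ν]
    (h : ℝ → ℝ) (hconv : ConvexOn ℝ Set.univ h) (hnonneg : ∀ x, 0 ≤ h x) :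
    IsLeast
      { r : ℝ≥0∞ | ∃ γ : Measure (ℝ × ℝ), IsProbabilityMeasure γ ∧
          γ.map Prod.fst = μ ∧ γ.map Prod.snd = ν ∧
          r = ∫⁻ p, ENNReal.ofReal (h (p.1 - p.2)) ∂γ }
      (∫⁻ q in Ioo (0:ℝ) 1, ENNReal.ofReal (h (quantileFn μ q - quantileFn ν q))) := by
  have hcont : Continuous h := by
    rw [← continuousOn_univ]; exact hconv.continuousOn isOpen_univ
  have := isProbabilityMeasure_volume_Ioo
  have hmμ := aemeasurable_quantileFn μ
  have hmν := aemeasurable_quantileFn ν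
  have hm := hmμ.prodMk hmν
  have hprob : IsProbabilityMeasure (quantileCoupling μ ν) := Measure.isProbabilityMeasure_map hm
  have hval : ∫⁻ q in Ioo (0:ℝ) 1, ENNReal.ofReal (h (quantileFn μ q - quantileFn ν q)) =
      ∫⁻ p, ENNReal.ofReal (h (p.1 - p.2)) ∂(quantileCoupling μ ν) := by
    rw [quantileCoupling, lintegral_map' (by fun_prop) hm]
  constructor
  · refine ⟨quantileCoupling μ ν, hprob, ?_, ?_, hval⟩
    · rw [quantileCoupling, AEMeasurable.map_map_of_aemeasurable (by fun_prop) hm]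
      exact map_quantileFn μ
    · rw [quantileCoupling, AEMeasurable.map_map_of_aemeasurable (by fun_prop) hm]
      exact map_quantileFn ν
  · rintro _ ⟨γ, hγ, h1, h2, rfl⟩
    rw [hval]
    have hsub : Measurable fun p : ℝ × ℝ => p.1 - p.2 := by fun_prop
    have hp1 : IsProbabilityMeasure ((quantileCoupling μ ν).map fun p => p.1 - p.2) :=
      Measure.isProbabilityMeasure_map hsub.aemeasurable
    have hp2 : IsProbabilityMeasure (γ.map fun p => p.1 - p.2) :=
      Measure.isProbabilityMeasure_map hsub.aemeasurable
    have key := lintegral_convex_le (ρ' := (quantileCoupling μ ν).map fun p => p.1 - p.2)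
      (ρ := γ.map fun p => p.1 - p.2) ?_ ?_ hconv hnonneg
    · rwa [lintegral_map (by fun_prop) hsub, lintegral_map (by fun_prop) hsub] at key
    · intro s
      rw [lintegral_map (by fun_prop) hsub, lintegral_map (by fun_prop) hsub]
      exact lintegral_hinge_quantileCoupling_le μ ν γ h1 h2 s
    · intro s
      rw [lintegral_map (by fun_prop) hsub, lintegral_map (by fun_prop) hsub]
      -- A reflected hinge is a hinge of `y - x`, so the swapped couplings of `ν` and `μ` apply.
      have hswap : quantileCoupling ν μ = (quantileCoupling μ ν).map Prod.swap := by
        rw [quantileCoupling, quantileCoupling,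
          AEMeasurable.map_map_of_aemeasurable (by fun_prop) hm]
        rfl
      have hp3 : IsProbabilityMeasure (γ.map Prod.swap) :=
        Measure.isProbabilityMeasure_map measurable_swap.aemeasurable
      have := lintegral_hinge_quantileCoupling_le ν μ (γ.map Prod.swap)
        (by rw [Measure.map_map measurable_fst measurable_swap]; exact h2)
        (by rw [Measure.map_map measurable_snd measurable_swap]; exact h1) (-s)
      rw [hswap, lintegral_map (by fun_prop) measurable_swap,
        lintegral_map (by fun_prop) measurable_swap] at this
      have hrw : ∀ p : ℝ × ℝ, p.swap.1 - p.swap.2 - -s = s - (p.1 - p.2) := fun p => by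
        simp only [Prod.fst_swap, Prod.snd_swap]; ring
      simpa only [hrw] using this
end

section
/- Fix positive integers N, M, vectors a ∈ ℝ^N and b ∈ ℝ^M with strictly positive entries satisfying ∑_i a_i = ∑_j b_j = 1, a matrix C ∈ ℝ^{N×M}, and χ > 0. Then there exists a unique matrix P* ∈ Π(a,b) minimizing f_χ over Π(a,b): f_χ(P*) ≤ f_χ(P) for all P ∈ Π(a,b), and any P ∈ Π(a,b) with f_χ(P) = f_χ(P*) equals P*. -/
/-!
The polytope `Π(a,b)` is compact (it is closed and lies in the cube `∏ [0, a i]`), nonempty (the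
independent coupling `a i * b j` belongs to it, as `a` and `b` both have total mass one) and convex.
Since `x ↦ x * log x` is continuous on `ℝ`, with value `0` at `0`, the objective is continuous and
attains its minimum. Since `x ↦ x * log x` is strictly convex on `[0, ∞)`, up to the boundary,
and `χ > 0`, the objective is strictly convex on `Π(a,b)`, so the minimizer is unique.
-/

open BigOperators

/-- The transport polytope `Π(a,b)`: nonnegative matrices with row sums `a`
and column sums `b`. -/
def transportPolytope {N M : ℕ} (a : Fin N → ℝ) (b : Fin M → ℝ) :
    Set (Matrix (Fin N) (Fin M) ℝ) :=
  { P | (∀ i j, 0 ≤ P i j) ∧ (∀ i, ∑ j, P i j = a i) ∧ (∀ j, ∑ i, P i j = b j) }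

/-- The entropic OT objective
`f_χ(P) = ∑_{i,j} C i j * P i j + χ * ∑_{i,j} P i j * log (P i j)`
(with `Real.log 0 = 0`, so the convention `0 * log 0 = 0` holds). -/
noncomputable def entropicOT {N M : ℕ} (C : Matrix (Fin N) (Fin M) ℝ) (χ : ℝ)
    (P : Matrix (Fin N) (Fin M) ℝ) : ℝ :=
  (∑ i, ∑ j, C i j * P i j) + χ * ∑ i, ∑ j, P i j * Real.log (P i j)

lemma convex_transportPolytope {N M : ℕ} (a : Fin N → ℝ) (b : Fin M → ℝ) :
    Convex ℝ (transportPolytope a b) := by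
  rintro P ⟨hP, hPa, hPb⟩ Q ⟨hQ, hQa, hQb⟩ s t hs ht hst
  refine ⟨fun i j => ?_, fun i => ?_, fun j => ?_⟩
  · have h1 := hP i j
    have h2 := hQ i j
    simp only [Matrix.add_apply, Matrix.smul_apply, smul_eq_mul]
    positivity
  · simp only [Matrix.add_apply, Matrix.smul_apply, smul_eq_mul, Finset.sum_add_distrib,
      ← Finset.mul_sum, hPa, hQa, ← add_mul, hst, one_mul]
  · simp only [Matrix.add_apply, Matrix.smul_apply, smul_eq_mul, Finset.sum_add_distrib,
      ← Finset.mul_sum, hPb, hQb, ← add_mul, hst, one_mul]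

lemma isCompact_transportPolytope {N M : ℕ} (a : Fin N → ℝ) (b : Fin M → ℝ) :
    IsCompact (transportPolytope a b) := by
  have hcube : IsCompact (Set.univ.pi fun i : Fin N =>
      Set.univ.pi fun _ : Fin M => Set.Icc 0 (a i)) :=
    isCompact_univ_pi fun i => isCompact_univ_pi fun _ => isCompact_Icc
  have hentry (i : Fin N) (j : Fin M) :
      Continuous fun P : Matrix (Fin N) (Fin M) ℝ => P i j :=
    continuous_id.matrix_elem i j
  have hclosed : IsClosed (transportPolytope a b) := by
    simp only [transportPolytope, Set.ofPred_and, Set.ofPred_forall]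
    refine .inter ?_ (.inter ?_ ?_)
    · exact isClosed_iInter fun i => isClosed_iInter fun j =>
        isClosed_le continuous_const (hentry i j)
    · exact isClosed_iInter fun i => isClosed_eq
        (continuous_finsetSum _ fun j _ => hentry i j) continuous_const
    · exact isClosed_iInter fun j => isClosed_eq
        (continuous_finsetSum _ fun i _ => hentry i j) continuous_const
  refine hcube.of_isClosed_subset hclosed ?_
  rintro P ⟨hP, hPa, -⟩ i - j -
  exact ⟨hP i j, hPa i ▸ Finset.single_le_sum (fun k _ => hP i k) (Finset.mem_univ j)⟩

lemma continuous_entropicOT {N M : ℕ} (C : Matrix (Fin N) (Fin M) ℝ) (χ : ℝ) :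
    Continuous (entropicOT C χ) := by
  have hentry (i : Fin N) (j : Fin M) :
      Continuous fun P : Matrix (Fin N) (Fin M) ℝ => P i j :=
    continuous_id.matrix_elem i j
  unfold entropicOT
  refine .add ?_ (.mul continuous_const ?_)
  · exact continuous_finsetSum _ fun i _ => continuous_finsetSum _ fun j _ =>
      continuous_const.mul (hentry i j)
  · exact continuous_finsetSum _ fun i _ => continuous_finsetSum _ fun j _ =>
      Real.continuous_mul_log.comp (hentry i j)

/-- The linear cost does not affect convexity; the entropy is a sum of one-variable convex terms,
and the term of an entry where the two matrices differ gives a strict inequality. -/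
lemma strictConvexOn_entropicOT {N M : ℕ} (a : Fin N → ℝ) (b : Fin M → ℝ)
    (C : Matrix (Fin N) (Fin M) ℝ) {χ : ℝ} (hχ : 0 < χ) :
    StrictConvexOn ℝ (transportPolytope a b) (entropicOT C χ) := by
  refine ⟨convex_transportPolytope a b, ?_⟩
  rintro P ⟨hP, -, -⟩ Q ⟨hQ, -, -⟩ hPQ s t hs ht hst
  obtain ⟨i₀, j₀, hne⟩ : ∃ i j, P i j ≠ Q i j := by
    by_contra! h
    exact hPQ (Matrix.ext h)
  have hle (i : Fin N) (j : Fin M) :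
      (s * P i j + t * Q i j) * Real.log (s * P i j + t * Q i j) ≤
        s * (P i j * Real.log (P i j)) + t * (Q i j * Real.log (Q i j)) :=
    Real.convexOn_mul_log.2 (hP i j) (hQ i j) hs.le ht.le hst
  have hlt : (s * P i₀ j₀ + t * Q i₀ j₀) * Real.log (s * P i₀ j₀ + t * Q i₀ j₀) <
        s * (P i₀ j₀ * Real.log (P i₀ j₀)) + t * (Q i₀ j₀ * Real.log (Q i₀ j₀)) :=
    Real.strictConvexOn_mul_log.2 (hP i₀ j₀) (hQ i₀ j₀) hne hs ht hst
  have hsum :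
      ∑ i, ∑ j, (s * P i j + t * Q i j) * Real.log (s * P i j + t * Q i j) <
        ∑ i, ∑ j, (s * (P i j * Real.log (P i j)) + t * (Q i j * Real.log (Q i j))) :=
    Finset.sum_lt_sum (fun i _ => Finset.sum_le_sum fun j _ => hle i j)
      ⟨i₀, Finset.mem_univ _, Finset.sum_lt_sum (fun j _ => hle i₀ j)
        ⟨j₀, Finset.mem_univ _, hlt⟩⟩
  have hlin : ∑ i, ∑ j, C i j * (s * P i j + t * Q i j) =
      s * ∑ i, ∑ j, C i j * P i j + t * ∑ i, ∑ j, C i j * Q i j := by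
    simp only [Finset.mul_sum, ← Finset.sum_add_distrib]
    exact Finset.sum_congr rfl fun i _ => Finset.sum_congr rfl fun j _ => by ring
  simp only [Finset.sum_add_distrib, ← Finset.mul_sum] at hsum
  simp only [entropicOT, Matrix.add_apply, Matrix.smul_apply, smul_eq_mul]
  rw [hlin]
  linarith [mul_lt_mul_of_pos_left hsum hχ]

theorem entropic_ot_exists_unique_minimizer
    {N M : ℕ} (hN : 0 < N) (hM : 0 < M)
    (a : Fin N → ℝ) (b : Fin M → ℝ)
    (ha : ∀ i, 0 < a i) (hb : ∀ j, 0 < b j)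
    (hsa : ∑ i, a i = 1) (hsb : ∑ j, b j = 1)
    (C : Matrix (Fin N) (Fin M) ℝ) (χ : ℝ) (hχ : 0 < χ) :
    ∃ Pstar ∈ transportPolytope a b,
      (∀ P ∈ transportPolytope a b, entropicOT C χ Pstar ≤ entropicOT C χ P) ∧
      (∀ P ∈ transportPolytope a b,
        entropicOT C χ P = entropicOT C χ Pstar → P = Pstar) := by
  have hne : (transportPolytope a b).Nonempty :=
    ⟨Matrix.of fun i j => a i * b j, fun i j => (mul_pos (ha i) (hb j)).le,
      fun i => by simp [← Finset.mul_sum, hsb], fun j => by simp [← Finset.sum_mul, hsa]⟩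
  obtain ⟨P₀, hP₀, hmin⟩ := (isCompact_transportPolytope a b).exists_isMinOn hne
    (continuous_entropicOT C χ).continuousOn
  refine ⟨P₀, hP₀, fun P hP => hmin hP, fun P hP hval => ?_⟩
  exact (strictConvexOn_entropicOT a b C hχ).eq_of_isMinOn
    (fun Q hQ => hval.trans_le (hmin hQ)) hmin hP hP₀
end

section
/- Fix positive integers N, M, vectors a ∈ ℝ^N and b ∈ ℝ^M with strictly positive entries satisfying ∑_i a_i = ∑_j b_j = 1, a matrix C ∈ ℝ^{N×M}, and χ > 0. Suppose P ∈ Π(a,b) and there exist vectors u ∈ ℝ^N and v ∈ ℝ^M with u_i > 0 and v_j > 0 for all i, j such that P i j = u_i · exp(−C i j / χ) · v_j for all i, j. Then P is the unique minimizer of f_χ over Π(a,b): for every P' ∈ Π(a,b) with P' ≠ P, f_χ(P') > f_χ(P). -/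
/-!
For `P i j = u i * exp (-C i j / χ) * v j`, the cost is
`C i j = χ * (log (u i) + log (v j) - log (P i j))`. On `Π(a,b)` the terms in `log (u i)` and
`log (v j)` sum to constants, as they only see the marginals of the plan, so there
`f_χ(Q) = const + χ * KL(Q ‖ P)` (`entropicOT_eq_const_add_kl`). Here
`KL(Q ‖ P) = ∑ P i j * klFun (Q i j / P i j)` with `klFun t = t * log t + 1 - t`, which is
nonnegative on `[0, ∞)` and vanishes only at `t = 1`; hence the divergence is positive unless
`Q = P`.
-/

open BigOperators

open InformationTheory in
/-- The generalized Kullback–Leibler divergence `KL(Q ‖ P)` of nonnegative matrices, meaningful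
when `P` has positive entries. -/
noncomputable def matrixKL {N M : ℕ} (Q P : Matrix (Fin N) (Fin M) ℝ) : ℝ :=
  ∑ i, ∑ j, P i j * klFun (Q i j / P i j)

open InformationTheory in
lemma matrixKL_self {N M : ℕ} {P : Matrix (Fin N) (Fin M) ℝ} (hP : ∀ i j, 0 < P i j) :
    matrixKL P P = 0 := by
  simp [matrixKL, div_self (hP _ _).ne', klFun_one]

open InformationTheory in
lemma matrixKL_pos {N M : ℕ} {Q P : Matrix (Fin N) (Fin M) ℝ} (hP : ∀ i j, 0 < P i j)
    (hQ : ∀ i j, 0 ≤ Q i j) (hne : Q ≠ P) : 0 < matrixKL Q P := by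
  have hnn : ∀ i j, 0 ≤ P i j * klFun (Q i j / P i j) := fun i j =>
    mul_nonneg (hP i j).le (klFun_nonneg (div_nonneg (hQ i j) (hP i j).le))
  obtain ⟨i, j, hij⟩ : ∃ i j, Q i j ≠ P i j := by
    by_contra! h
    exact hne (Matrix.ext h)
  have hpos : 0 < P i j * klFun (Q i j / P i j) := by
    refine lt_of_le_of_ne (hnn i j) fun h => hij ?_
    have h0 := (mul_eq_zero.mp h.symm).resolve_left (hP i j).ne'
    rw [klFun_eq_zero_iff (div_nonneg (hQ i j) (hP i j).le)] at h0
    exact (div_eq_one_iff_eq (hP i j).ne').mp h0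
  exact Finset.sum_pos' (fun i _ => Finset.sum_nonneg fun j _ => hnn i j)
    ⟨i, Finset.mem_univ i, Finset.sum_pos' (fun j _ => hnn i j) ⟨j, Finset.mem_univ j, hpos⟩⟩

open InformationTheory in
/-- The entrywise identity behind `entropicOT_eq_const_add_kl`, valid also at `x = 0`. -/
lemma entry_cost_eq {c χ u v x p : ℝ} (hχ : 0 < χ) (hu : 0 < u) (hv : 0 < v)
    (hp : p = u * Real.exp (-c / χ) * v) :
    c * x + χ * (x * Real.log x) =
      χ * (Real.log u * x + Real.log v * x + p * klFun (x / p) - p + x) := by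
  have hp0 : 0 < p := by rw [hp]; positivity
  have hlog : Real.log p = Real.log u + -c / χ + Real.log v := by
    rw [hp, Real.log_mul (by positivity) hv.ne', Real.log_mul hu.ne' (Real.exp_ne_zero _),
      Real.log_exp]
  have hc : c = χ * (Real.log u + Real.log v - Real.log p) := by
    rw [hlog]; field_simp; ring
  have hkl : p * klFun (x / p) = x * Real.log x - x * Real.log p + p - x := by
    rcases eq_or_ne x 0 with rfl | hx
    · simp [klFun_zero]
    · rw [klFun_apply, Real.log_div hx hp0.ne']
      field_simp
  rw [hkl]
  linear_combination x * hc

/-- On the transport polytope, the entropic objective is, up to an additive constant, `χ` times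
the divergence from the matrix in scaling form. -/
lemma entropicOT_eq_const_add_kl {N M : ℕ} {a : Fin N → ℝ} {b : Fin M → ℝ}
    {C P Q : Matrix (Fin N) (Fin M) ℝ} {χ : ℝ} (hχ : 0 < χ) {u : Fin N → ℝ} {v : Fin M → ℝ}
    (hu : ∀ i, 0 < u i) (hv : ∀ j, 0 < v j)
    (hform : ∀ i j, P i j = u i * Real.exp (-C i j / χ) * v j)
    (hQ : Q ∈ transportPolytope a b) :
    entropicOT C χ Q =
      χ * (∑ i, Real.log (u i) * a i + ∑ j, Real.log (v j) * b j - ∑ i, ∑ j, P i j + ∑ i, a i)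
        + χ * matrixKL Q P := by
  obtain ⟨-, hrow, hcol⟩ := hQ
  have hV : ∑ i, ∑ j, Real.log (v j) * Q i j = ∑ j, Real.log (v j) * b j := by
    rw [Finset.sum_comm]
    simp only [← Finset.mul_sum, hcol]
  have hsum : entropicOT C χ Q =
      ∑ i, ∑ j, (C i j * Q i j + χ * (Q i j * Real.log (Q i j))) := by
    simp only [entropicOT, Finset.sum_add_distrib, Finset.mul_sum]
  simp only [hsum, fun i j => entry_cost_eq (x := Q i j) hχ (hu i) (hv j) (hform i j),
    ← Finset.mul_sum, Finset.sum_add_distrib, Finset.sum_sub_distrib]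
  simp only [hrow, hV, matrixKL]
  ring

theorem sinkhorn_form_is_unique_minimizer
    {N M : ℕ} (hN : 0 < N) (hM : 0 < M)
    (a : Fin N → ℝ) (b : Fin M → ℝ)
    (ha : ∀ i, 0 < a i) (hb : ∀ j, 0 < b j)
    (hsa : ∑ i, a i = 1) (hsb : ∑ j, b j = 1)
    (C : Matrix (Fin N) (Fin M) ℝ) (χ : ℝ) (hχ : 0 < χ)
    (P : Matrix (Fin N) (Fin M) ℝ) (hP : P ∈ transportPolytope a b)
    (u : Fin N → ℝ) (v : Fin M → ℝ) (hu : ∀ i, 0 < u i) (hv : ∀ j, 0 < v j)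
    (hform : ∀ i j, P i j = u i * Real.exp (-C i j / χ) * v j) :
    ∀ P' ∈ transportPolytope a b, P' ≠ P → entropicOT C χ P < entropicOT C χ P' := by
  intro Q hQ hne
  have hpos : ∀ i j, 0 < P i j := fun i j => by
    rw [hform]
    exact mul_pos (mul_pos (hu i) (Real.exp_pos _)) (hv j)
  rw [entropicOT_eq_const_add_kl hχ hu hv hform hP, entropicOT_eq_const_add_kl hχ hu hv hform hQ,
    matrixKL_self hpos]
  have := mul_pos hχ (matrixKL_pos hpos hQ.1 hne)
  linarith
end

section
/- Let K ∈ ℝ^{N×M} be a matrix with strictly positive entries, and let a ∈ ℝ^N and b ∈ ℝ^M have strictly positive entries with ∑_i a_i = ∑_j b_j. Then there exist vectors u ∈ ℝ^N and v ∈ ℝ^M with strictly positive entries such that the matrix P with P i j = u_i · K i j · v_j satisfies ∑_j P i j = a_i for every i and ∑_i P i j = b_j for every j (Sinkhorn's matrix scaling theorem). -/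
/-!
Eliminating `v` through the column constraints, `v j = b j / ∑ i, u i * K i j`, turns the row
constraints into the criticality equations of
`L u = ∑ i, a i * log (u i) - ∑ j, b j * log (∑ i, u i * K i j)` on the positive orthant.
Because `∑ a = ∑ b`, `L` is homogeneous of degree `0`, so it is enough to maximize it on the
standard simplex. There `exp L` extends continuously to
`∏ i, u i ^ a i / ∏ j, (∑ i, u i * K i j) ^ b j`, which vanishes on the boundary of the simplex and
is positive inside; by compactness it attains its maximum, at an interior point. That point
maximizes `L` on the whole open orthant, so all partial derivatives of `L` vanish there.
-/

open BigOperators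

/-- The logarithmic potential of the scaling problem after the elimination of `v`. -/
noncomputable def scalingPotential {N M : ℕ} (K : Matrix (Fin N) (Fin M) ℝ)
    (a : Fin N → ℝ) (b : Fin M → ℝ) (u : Fin N → ℝ) : ℝ :=
  ∑ i, a i * Real.log (u i) - ∑ j, b j * Real.log (∑ i, u i * K i j)

lemma colSum_pos {N M : ℕ} {K : Matrix (Fin N) (Fin M) ℝ} (hK : ∀ i j, 0 < K i j)
    {u : Fin N → ℝ} (hu : ∀ i, 0 ≤ u i) (hs : 0 < ∑ i, u i) (j : Fin M) :
    0 < ∑ i, u i * K i j := by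
  obtain ⟨i, hi, hpos⟩ := Finset.exists_lt_of_sum_lt (f := fun _ => (0 : ℝ)) (by simpa using hs)
  exact Finset.sum_pos' (fun k _ => mul_nonneg (hu k) (hK k j).le)
    ⟨i, hi, mul_pos hpos (hK i j)⟩

/-- Homogeneity of degree `0`, where the equality of the total masses of `a` and `b` enters. -/
lemma scalingPotential_smul {N M : ℕ} (hN : 0 < N) {K : Matrix (Fin N) (Fin M) ℝ}
    (hK : ∀ i j, 0 < K i j) {a : Fin N → ℝ} {b : Fin M → ℝ} (hab : ∑ i, a i = ∑ j, b j)
    {u : Fin N → ℝ} (hu : ∀ i, 0 < u i) {c : ℝ} (hc : 0 < c) :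
    scalingPotential K a b (fun i => c * u i) = scalingPotential K a b u := by
  have : Nonempty (Fin N) := ⟨⟨0, hN⟩⟩
  have hs : 0 < ∑ i, u i := Finset.sum_pos (fun i _ => hu i) Finset.univ_nonempty
  have h1 : ∀ i, Real.log (c * u i) = Real.log c + Real.log (u i) := fun i =>
    Real.log_mul hc.ne' (hu i).ne'
  have h2 : ∀ j, Real.log (∑ i, c * u i * K i j)
      = Real.log c + Real.log (∑ i, u i * K i j) := fun j => by
    simp only [mul_assoc, ← Finset.mul_sum]
    exact Real.log_mul hc.ne' (colSum_pos hK (fun i => (hu i).le) hs j).ne'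
  simp only [scalingPotential, h1, h2, mul_add, Finset.sum_add_distrib, ← Finset.sum_mul, hab]
  ring

/-- The potential attains its maximum over the open positive orthant. -/
lemma exists_max_scalingPotential {N M : ℕ} (hN : 0 < N) {K : Matrix (Fin N) (Fin M) ℝ}
    (hK : ∀ i j, 0 < K i j) {a : Fin N → ℝ} {b : Fin M → ℝ} (ha : ∀ i, 0 < a i)
    (hb : ∀ j, 0 < b j) (hab : ∑ i, a i = ∑ j, b j) :
    ∃ u : Fin N → ℝ, (∀ i, 0 < u i) ∧ ∀ w : Fin N → ℝ, (∀ i, 0 < w i) →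
      scalingPotential K a b w ≤ scalingPotential K a b u := by
  have : Nonempty (Fin N) := ⟨⟨0, hN⟩⟩
  set G : (Fin N → ℝ) → ℝ :=
    fun u => (∏ i, u i ^ a i) / ∏ j, (∑ i, u i * K i j) ^ b j with hG
  have hcol : ∀ u ∈ stdSimplex ℝ (Fin N), ∀ j, 0 < ∑ i, u i * K i j := fun u hu j =>
    colSum_pos hK hu.1 (by rw [hu.2]; exact one_pos) j
  have hden : ∀ u ∈ stdSimplex ℝ (Fin N), 0 < ∏ j, (∑ i, u i * K i j) ^ b j := fun u hu =>
    Finset.prod_pos fun j _ => Real.rpow_pos_of_pos (hcol u hu j) _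
  have hcont : ContinuousOn G (stdSimplex ℝ (Fin N)) := by
    refine ContinuousOn.div (Continuous.continuousOn ?_) (Continuous.continuousOn ?_)
      fun u hu => (hden u hu).ne'
    · exact continuous_finsetProd _ fun i _ =>
        (continuous_apply i).rpow_const fun _ => Or.inr (ha i).le
    · refine continuous_finsetProd _ fun j _ => Continuous.rpow_const ?_ fun _ => Or.inr (hb j).le
      fun_prop
  have hpos : ∀ u ∈ stdSimplex ℝ (Fin N), (∀ i, 0 < u i) → 0 < G u := fun u hu h =>
    div_pos (Finset.prod_pos fun i _ => Real.rpow_pos_of_pos (h i) _) (hden u hu)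
  have hlog : ∀ u ∈ stdSimplex ℝ (Fin N), (∀ i, 0 < u i) →
      Real.log (G u) = scalingPotential K a b u := by
    intro u hu h
    have hnum : (∏ i, u i ^ a i) ≠ 0 :=
      (Finset.prod_pos fun i _ => Real.rpow_pos_of_pos (h i) _).ne'
    simp only [hG, scalingPotential]
    rw [Real.log_div hnum (hden u hu).ne',
      Real.log_prod fun i _ => (Real.rpow_pos_of_pos (h i) _).ne',
      Real.log_prod fun j _ => (Real.rpow_pos_of_pos (hcol u hu j) _).ne']
    simp only [Real.log_rpow (h _), Real.log_rpow (hcol u hu _)]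
  have hnorm : ∀ w : Fin N → ℝ, (∀ i, 0 < w i) → 0 < (∑ i, w i)⁻¹ ∧
      (fun i => (∑ i, w i)⁻¹ * w i) ∈ stdSimplex ℝ (Fin N) := by
    intro w hw
    have hs : 0 < ∑ i, w i := Finset.sum_pos (fun i _ => hw i) Finset.univ_nonempty
    refine ⟨inv_pos.2 hs, fun i => (mul_pos (inv_pos.2 hs) (hw i)).le, ?_⟩
    rw [← Finset.mul_sum, inv_mul_cancel₀ hs.ne']
  obtain ⟨hc, hmem⟩ := hnorm (fun _ => 1) fun _ => one_pos
  obtain ⟨u, hu, hmax⟩ := (isCompact_stdSimplex ℝ (Fin N)).exists_isMaxOn ⟨_, hmem⟩ hcont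
  have hGu : 0 < G u := (hpos _ hmem fun _ => mul_pos hc one_pos).trans_le (hmax hmem)
  have hu0 : ∀ i, 0 < u i := by
    intro i
    refine (hu.1 i).lt_of_ne' fun h0 => hGu.ne' ?_
    have : ∏ i, u i ^ a i = 0 :=
      Finset.prod_eq_zero (Finset.mem_univ i) (by rw [h0, Real.zero_rpow (ha i).ne'])
    simp only [hG, this, zero_div]
  refine ⟨u, hu0, fun w hw => ?_⟩
  obtain ⟨hcw, hmw⟩ := hnorm w hw
  have hw' : ∀ i, 0 < (∑ i, w i)⁻¹ * w i := fun i => mul_pos hcw (hw i)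
  rw [← scalingPotential_smul hN hK hab hw hcw, ← hlog _ hmw hw', ← hlog u hu hu0]
  exact Real.log_le_log (hpos _ hmw hw') (hmax hmw)

/-- The directional derivative of the potential. -/
lemma hasDerivAt_scalingPotential {N M : ℕ} {K : Matrix (Fin N) (Fin M) ℝ}
    {a : Fin N → ℝ} {b : Fin M → ℝ} {u : Fin N → ℝ} (hu : ∀ i, u i ≠ 0)
    (hcol : ∀ j, ∑ i, u i * K i j ≠ 0) (e : Fin N → ℝ) :
    HasDerivAt (fun t : ℝ => scalingPotential K a b (fun i => u i + t * e i))
      (∑ i, a i * (e i / u i) - ∑ j, b j * ((∑ i, e i * K i j) / ∑ i, u i * K i j)) 0 := by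
  have hlin : ∀ i, HasDerivAt (fun t : ℝ => u i + t * e i) (e i) 0 := fun i => by
    simpa using ((hasDerivAt_id (0 : ℝ)).mul_const (e i)).const_add (u i)
  unfold scalingPotential
  refine HasDerivAt.sub (HasDerivAt.fun_sum fun i _ => ?_) (HasDerivAt.fun_sum fun j _ => ?_)
  · simpa using ((hlin i).log (by simpa using hu i)).const_mul (a i)
  · have hsum : HasDerivAt (fun t : ℝ => ∑ i, (u i + t * e i) * K i j) (∑ i, e i * K i j) 0 :=
      HasDerivAt.fun_sum fun i _ => (hlin i).mul_const (K i j)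
    simpa using (hsum.log (by simpa using hcol j)).const_mul (b j)

theorem sinkhorn_matrix_scaling
    {N M : ℕ} (hN : 0 < N) (hM : 0 < M)
    (K : Matrix (Fin N) (Fin M) ℝ) (hK : ∀ i j, 0 < K i j)
    (a : Fin N → ℝ) (b : Fin M → ℝ)
    (ha : ∀ i, 0 < a i) (hb : ∀ j, 0 < b j)
    (hab : ∑ i, a i = ∑ j, b j) :
    ∃ u : Fin N → ℝ, ∃ v : Fin M → ℝ,
      (∀ i, 0 < u i) ∧ (∀ j, 0 < v j) ∧
      (∀ i, ∑ j, u i * K i j * v j = a i) ∧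
      (∀ j, ∑ i, u i * K i j * v j = b j) := by
  have : Nonempty (Fin N) := ⟨⟨0, hN⟩⟩
  obtain ⟨u, hu, hmax⟩ := exists_max_scalingPotential hN hK ha hb hab
  have hs : 0 < ∑ i, u i := Finset.sum_pos (fun i _ => hu i) Finset.univ_nonempty
  have hcol := colSum_pos hK (fun i => (hu i).le) hs
  refine ⟨u, fun j => b j / ∑ i, u i * K i j, hu, fun j => div_pos (hb j) (hcol j),
    fun i => ?_, fun j => ?_⟩
  · have hder := hasDerivAt_scalingPotential (a := a) (b := b) (fun i => (hu i).ne')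
      (fun j => (hcol j).ne') (Pi.single i 1)
    have hlocal : IsLocalMax (fun t : ℝ =>
        scalingPotential K a b (fun k => u k + t * (Pi.single i 1 : Fin N → ℝ) k)) 0 := by
      have hev : ∀ᶠ t : ℝ in nhds 0, ∀ k, 0 < u k + t * (Pi.single i 1 : Fin N → ℝ) k := by
        refine Filter.eventually_all.2 fun k => ?_
        have hc : Continuous fun t : ℝ => u k + t * (Pi.single i 1 : Fin N → ℝ) k := by fun_prop
        exact hc.continuousAt.eventually (lt_mem_nhds (by simpa using hu k))
      filter_upwards [hev] with t ht
      simpa using hmax _ ht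
    have h0 := hlocal.hasDerivAt_eq_zero hder
    have hcrit : a i * (1 / u i) = ∑ j, b j * (K i j / ∑ k, u k * K k j) := by
      simpa [Pi.single_apply, ite_div, sub_eq_zero] using h0
    calc ∑ j, u i * K i j * (b j / ∑ k, u k * K k j)
        = u i * ∑ j, b j * (K i j / ∑ k, u k * K k j) := by
          rw [Finset.mul_sum]
          exact Finset.sum_congr rfl fun j _ => by ring
      _ = a i := by
          rw [← hcrit]
          have := (hu i).ne'
          field_simp
  · rw [← Finset.sum_mul, mul_div_cancel₀ _ (hcol j).ne']
end

section
/- Fix positive integers N, M, vectors a ∈ ℝ^N and b ∈ ℝ^M with nonnegative entries satisfying ∑_i a_i = ∑_j b_j = 1, and a matrix C ∈ ℝ^{N×M}. For χ > 0 let V(χ) = inf { f_χ(P) | P ∈ Π(a,b) }, and let V₀ = inf { ∑_{i,j} C i j * P i j | P ∈ Π(a,b) }. Then V(χ) tends to V₀ as χ → 0 from the right (i.e., along the filter of positive reals approaching 0). -/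
/-!
Every entry of a plan `P ∈ Π(a,b)` lies in `[0,1]`, so each `P i j * log (P i j)` lies in `[-1,0]`
and the entropy sum lies in `[-NM, 0]`. The entropic objective is therefore within `χ * NM` of the
linear one, uniformly on the polytope. As the polytope is nonempty (it contains the product plan
`a i * b j`) and the linear cost is bounded below on it, taking infima gives
`V₀ - χ * NM ≤ V(χ) ≤ V₀`, and the claim follows by squeezing.
-/

open BigOperators

open Filter Topology

lemma le_one_of_mem_transportPolytope {N M : ℕ} {a : Fin N → ℝ} {b : Fin M → ℝ}
    (ha : ∀ i, 0 ≤ a i) (hsa : ∑ i, a i = 1)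
    {P : Matrix (Fin N) (Fin M) ℝ} (hP : P ∈ transportPolytope a b) (i : Fin N) (j : Fin M) :
    P i j ≤ 1 := by
  calc P i j ≤ ∑ j, P i j :=
        Finset.single_le_sum (fun j _ => hP.1 i j) (Finset.mem_univ j)
    _ = a i := hP.2.1 i
    _ ≤ ∑ i, a i := Finset.single_le_sum (fun i _ => ha i) (Finset.mem_univ i)
    _ = 1 := hsa

lemma neg_one_le_mul_log {x : ℝ} (hx : 0 ≤ x) : -1 ≤ x * Real.log x := by
  rcases hx.eq_or_lt with rfl | hx
  · simp
  · have h := mul_le_mul_of_nonneg_left (Real.one_sub_inv_le_log_of_pos hx) hx.le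
    rw [mul_sub, mul_inv_cancel₀ hx.ne'] at h
    linarith

lemma sum_mul_log_mem_Icc {N M : ℕ} {a : Fin N → ℝ} {b : Fin M → ℝ}
    (ha : ∀ i, 0 ≤ a i) (hsa : ∑ i, a i = 1)
    {P : Matrix (Fin N) (Fin M) ℝ} (hP : P ∈ transportPolytope a b) :
    ∑ i, ∑ j, P i j * Real.log (P i j) ∈ Set.Icc (-((N : ℝ) * M)) 0 := by
  constructor
  · calc -((N : ℝ) * M) = ∑ _i : Fin N, ∑ _j : Fin M, (-1 : ℝ) := by simp
      _ ≤ _ := Finset.sum_le_sum fun i _ => Finset.sum_le_sum fun j _ =>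
        neg_one_le_mul_log (hP.1 i j)
  · exact Finset.sum_nonpos fun i _ => Finset.sum_nonpos fun j _ =>
      Real.mul_log_nonpos (hP.1 i j) (le_one_of_mem_transportPolytope ha hsa hP i j)

lemma neg_sum_abs_le_cost {N M : ℕ} {a : Fin N → ℝ} {b : Fin M → ℝ}
    (ha : ∀ i, 0 ≤ a i) (hsa : ∑ i, a i = 1) (C : Matrix (Fin N) (Fin M) ℝ)
    {P : Matrix (Fin N) (Fin M) ℝ} (hP : P ∈ transportPolytope a b) :
    -∑ i, ∑ j, |C i j| ≤ ∑ i, ∑ j, C i j * P i j := by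
  simp only [← Finset.sum_neg_distrib]
  refine Finset.sum_le_sum fun i _ => Finset.sum_le_sum fun j _ => ?_
  have h0 := hP.1 i j
  have h1 := le_one_of_mem_transportPolytope ha hsa hP i j
  nlinarith [mul_nonneg (neg_le_iff_add_nonneg'.1 (neg_abs_le (C i j))) h0,
    mul_nonneg (abs_nonneg (C i j)) (sub_nonneg.2 h1)]

/-- The product plan `a i * b j` is feasible. -/
lemma transportPolytope_nonempty {N M : ℕ} {a : Fin N → ℝ} {b : Fin M → ℝ}
    (ha : ∀ i, 0 ≤ a i) (hb : ∀ j, 0 ≤ b j) (hsa : ∑ i, a i = 1) (hsb : ∑ j, b j = 1) :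
    (transportPolytope a b).Nonempty :=
  ⟨fun i j => a i * b j, fun i j => mul_nonneg (ha i) (hb j),
    fun i => by rw [← Finset.mul_sum, hsb, mul_one],
    fun j => by rw [← Finset.sum_mul, hsa, one_mul]⟩

theorem entropic_ot_value_tendsto_ot_value
    {N M : ℕ} (hN : 0 < N) (hM : 0 < M)
    (a : Fin N → ℝ) (b : Fin M → ℝ)
    (ha : ∀ i, 0 ≤ a i) (hb : ∀ j, 0 ≤ b j)
    (hsa : ∑ i, a i = 1) (hsb : ∑ j, b j = 1)
    (C : Matrix (Fin N) (Fin M) ℝ) :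
    Filter.Tendsto
      (fun χ : ℝ => sInf (entropicOT C χ '' transportPolytope a b))
      (nhdsWithin 0 (Set.Ioi 0))
      (nhds (sInf ((fun P : Matrix (Fin N) (Fin M) ℝ => ∑ i, ∑ j, C i j * P i j) ''
        transportPolytope a b))) := by
  have hne := transportPolytope_nonempty ha hb hsa hsb
  set L : Matrix (Fin N) (Fin M) ℝ → ℝ := fun P => ∑ i, ∑ j, C i j * P i j with hL
  have hbdd : BddBelow (L '' transportPolytope a b) := by
    refine ⟨-∑ i, ∑ j, |C i j|, ?_⟩
    rintro _ ⟨P, hP, rfl⟩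
    exact neg_sum_abs_le_cost ha hsa C hP
  have hlow : ∀ χ : ℝ, 0 < χ → ∀ P ∈ transportPolytope a b,
      sInf (L '' transportPolytope a b) - χ * (N * M) ≤ entropicOT C χ P := by
    intro χ hχ P hP
    have h1 : sInf (L '' transportPolytope a b) ≤ L P := csInf_le hbdd ⟨P, hP, rfl⟩
    have h2 := mul_le_mul_of_nonneg_left (sum_mul_log_mem_Icc ha hsa hP).1 hχ.le
    simp only [hL] at h1
    unfold entropicOT
    linarith
  have hlim : Tendsto (fun χ : ℝ => sInf (L '' transportPolytope a b) - χ * (N * M))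
      (𝓝[>] 0) (𝓝 (sInf (L '' transportPolytope a b))) := by
    have hc : Continuous fun χ : ℝ => sInf (L '' transportPolytope a b) - χ * (N * M) := by
      fun_prop
    simpa using (hc.tendsto 0).mono_left nhdsWithin_le_nhds
  refine tendsto_of_tendsto_of_tendsto_of_le_of_le' hlim tendsto_const_nhds ?_ ?_
  · filter_upwards [self_mem_nhdsWithin] with χ hχ
    refine le_csInf (hne.image _) ?_
    rintro _ ⟨P, hP, rfl⟩
    exact hlow χ hχ P hP
  · filter_upwards [self_mem_nhdsWithin] with χ hχ
    refine le_csInf (hne.image _) ?_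
    rintro _ ⟨P, hP, rfl⟩
    have hb' : BddBelow (entropicOT C χ '' transportPolytope a b) := by
      refine ⟨sInf (L '' transportPolytope a b) - χ * (N * M), ?_⟩
      rintro _ ⟨Q, hQ, rfl⟩
      exact hlow χ hχ Q hQ
    refine (csInf_le hb' ⟨P, hP, rfl⟩).trans ?_
    have h := mul_nonpos_of_nonneg_of_nonpos (le_of_lt hχ) (sum_mul_log_mem_Icc ha hsa hP).2
    simp only [hL]
    unfold entropicOT
    linarith
end
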